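/- Let A be a connected graded k-algebra and let t ∈ A be a homogeneous regular (non-zero-divisor) normal element of positive degree (normal means tA = At). If the projective dimension of the trivial module k over A/(t) is finite, then pdim_A(k) = pdim_{A/(t)}(k) + 1. -/

import Mathlib

open CategoryTheory Limits TensorProduct

universe u

/-- The injective dimension of a module `M`, defined as the least `n : ℕ∞` for which
there is an injective resolution of `M` that vanishes in all cohomological degrees `> n`. -/
noncomputable def ModuleCat.injDim {R : Type u} [Ring R] (M : ModuleCat.{u} R) : ℕ∞ :=
  sInf {n : ℕ∞ | ∃ I : InjectiveResolution M, ∀ i : ℕ, n < (i : ℕ∞) → IsZero (I.cocomplex.X i)}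

/-- The projective dimension of a module `M`, defined as the least `n : ℕ∞` for which
there is a projective resolution of `M` that vanishes in all homological degrees `> n`. -/
noncomputable def ModuleCat.projDim {R : Type u} [Ring R] (M : ModuleCat.{u} R) : ℕ∞ :=
  sInf {n : ℕ∞ | ∃ P : ProjectiveResolution M, ∀ i : ℕ, n < (i : ℕ∞) → IsZero (P.complex.X i)}

/-- The injective dimension of a ring as a left module over itself. -/
noncomputable def Ring.selfInjDim (R : Type u) [Ring R] : ℕ∞ :=
  ModuleCat.injDim (ModuleCat.of R R)

/-- The left global dimension of a ring: the supremum of the projective dimensions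
of all left `R`-modules. -/
noncomputable def Ring.globalDim (R : Type u) [Ring R] : ℕ∞ :=
  ⨆ M : ModuleCat.{u} R, M.projDim

/-!
This is Kaplansky's change of rings. The `A`-free resolution `0 → A → A → B → 0` of `B = A ⧸ (t)`
shows that free `B`-modules have projective dimension at most `1` over `A`, so dimension shifting
gives `pd_A M ≤ pd_B M + 1`.

For equality it is enough that `pd_B M ≤ n` and `pd_A M ≤ n` force `pd_B M < n`, and shifting along
free `B`-covers reduces this to `n ≤ 1`. If `n = 0`, then `M` embeds into a free `A`-module, on
which `t` is injective, while `t` kills `M`; so `M = 0`. If `n = 1`, lift a free `A`-cover `P → M`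
with kernel `K` to `v : P → F` along a free `B`-cover `F → M` with kernel `L`; since `M = P / K`,
the cover `F → M` splits once `v : K → L` extends to `w : P → L`. Lift `v : K → L` to `u : K → F'`
with `F'` the free `A`-module on `L`. As `t` kills `F`, it maps `P` into `K`, and every `u (t • x)`
is divisible by `t`, so `t • w x = u (t • x)` defines an extension of `u` to `P`; normality of `t`
makes it linear.
-/

section ProjectiveResolutions

variable {C : Type*} [Category C] [Abelian C]

lemma quasiIso_toSingle₀Equiv_symm {K : ChainComplex C ℕ} {Z : C} (f : K.X 0 ⟶ Z)
    (w : K.d 1 0 ≫ f = 0) (exact₀ : (ShortComplex.mk (K.d 1 0) f w).Exact) (epi : Epi f)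
    (exact_succ : ∀ n, K.ExactAt (n + 1)) :
    QuasiIso ((ChainComplex.toSingle₀Equiv K Z).symm ⟨f, w⟩) where
  quasiIsoAt n := by
    cases n with
    | zero =>
      rw [ChainComplex.quasiIsoAt₀_iff, ShortComplex.quasiIso_iff_of_zeros']
      · refine (ShortComplex.exact_and_epi_g_iff_of_iso ?_).2 ⟨exact₀, epi⟩
        refine ShortComplex.isoMk (Iso.refl _) (Iso.refl _) (Iso.refl _) ?_ ?_
        · exact (Category.id_comp _).trans (Category.comp_id _).symm
        · exact (Category.id_comp _).trans
            ((ChainComplex.toSingle₀Equiv_symm_apply_f_zero f w).symm.trans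
              (Category.comp_id _).symm)
      · exact K.shape _ _ (by simp)
      all_goals rfl
    | succ n =>
      rw [quasiIsoAt_iff_exactAt' _ _ (ChainComplex.exactAt_succ_single_obj ..)]
      exact exact_succ n

lemma exact_mk_comp_mono {X Y Z W : C} {f : X ⟶ Y} {g : Y ⟶ Z} {w : f ≫ g = 0}
    (hfg : (ShortComplex.mk f g w).Exact) (i : Z ⟶ W) [Mono i] :
    (ShortComplex.mk f (g ≫ i) (by rw [reassoc_of% w, zero_comp])).Exact := by
  let φ : ShortComplex.mk f g w ⟶
      ShortComplex.mk f (g ≫ i) (by rw [reassoc_of% w, zero_comp]) :=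
    { τ₁ := 𝟙 X, τ₂ := 𝟙 Y, τ₃ := i }
  have : Epi φ.τ₁ := inferInstanceAs (Epi (𝟙 X))
  have : IsIso φ.τ₂ := inferInstanceAs (IsIso (𝟙 Y))
  have : Mono φ.τ₃ := ‹Mono i›
  exact (ShortComplex.exact_iff_of_epi_of_isIso_of_mono φ).1 hfg

lemma exact_mk_epi_comp {W X Y Z : C} {f : X ⟶ Y} {g : Y ⟶ Z} {w : f ≫ g = 0}
    (hfg : (ShortComplex.mk f g w).Exact) (p : W ⟶ X) [Epi p] :
    (ShortComplex.mk (p ≫ f) g (by rw [Category.assoc, w, comp_zero])).Exact := by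
  let φ : ShortComplex.mk (p ≫ f) g (by rw [Category.assoc, w, comp_zero]) ⟶
      ShortComplex.mk f g w :=
    { τ₁ := p, τ₂ := 𝟙 Y, τ₃ := 𝟙 Z }
  have : Epi φ.τ₁ := ‹Epi p›
  have : IsIso φ.τ₂ := inferInstanceAs (IsIso (𝟙 Y))
  have : Mono φ.τ₃ := inferInstanceAs (Mono (𝟙 Z))
  exact (ShortComplex.exact_iff_of_epi_of_isIso_of_mono φ).2 hfg

/-- The projective resolution `⋯ → Q₁ → Q₀ → X₂ → X₃ → 0` of the cokernel in a short exact
sequence `0 → X₁ → X₂ → X₃ → 0` with `X₂` projective, spliced from a projective resolution `Q` of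
`X₁`. -/
noncomputable def spliceResolution {S : ShortComplex C} (hS : S.ShortExact) [Projective S.X₂]
    (Q : ProjectiveResolution S.X₁) : ProjectiveResolution S.X₃ :=
  let ε : Q.complex.X 0 ⟶ S.X₁ := Q.π.f 0
  have hε : Q.complex.d 1 0 ≫ ε = 0 := Q.complex_d_comp_π_f_zero
  have exact₀ : (ShortComplex.mk _ _ hε).Exact := Q.exact₀
  have : Epi ε := inferInstanceAs (Epi (Q.π.f 0))
  have := hS.mono_f
  { complex := Q.complex.augment (ε ≫ S.f) (by rw [reassoc_of% hε, zero_comp])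
    projective := by
      rintro (_ | n)
      · exact ‹Projective S.X₂›
      · exact Q.projective n
    π := (ChainComplex.toSingle₀Equiv _ S.X₃).symm
      ⟨S.g, by
        change (ε ≫ S.f) ≫ S.g = 0
        rw [Category.assoc, S.zero, comp_zero]⟩
    quasiIso := by
      refine quasiIso_toSingle₀Equiv_symm _ _ (exact_mk_epi_comp hS.exact ε) hS.epi_g
        fun n => ?_
      rw [HomologicalComplex.exactAt_iff' _ (n + 1 + 1) (n + 1) n (by simp) (by simp)]
      cases n with
      | zero => exact exact_mk_comp_mono exact₀ S.f
      | succ n => exact Q.exact_succ n }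

lemma hasProjectiveDimensionLT_of_isZero_resolution {Z : C} (P : ProjectiveResolution Z) {n : ℕ}
    (hP : ∀ i, n ≤ i → IsZero (P.complex.X i)) : HasProjectiveDimensionLT Z n := by
  let := HasExt.standard C
  rw [hasProjectiveDimensionLT_iff]
  intro i hi Y e
  obtain ⟨f, _, rfl⟩ := P.extMk_surjective e (i + 1) rfl
  obtain rfl : f = 0 := (hP i hi).eq_of_src _ _
  simp

lemma exists_projectiveResolution_isZero [EnoughProjectives C] {Z : C} {n : ℕ}
    (hZ : HasProjectiveDimensionLT Z (n + 1)) :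
    ∃ P : ProjectiveResolution Z, ∀ i, n < i → IsZero (P.complex.X i) := by
  induction n generalizing Z with
  | zero =>
    have := projective_iff_hasProjectiveDimensionLT_one.2 hZ
    exact ⟨.self Z, fun i hi => HomologicalComplex.isZero_single_obj_X _ _ _ _ hi.ne'⟩
  | succ n ih =>
    let S := ShortComplex.mk _ _ (kernel.condition (Projective.π Z))
    have hS : S.ShortExact :=
      { exact := ShortComplex.exact_kernel _
        mono_f := inferInstanceAs (Mono (kernel.ι _))
        epi_g := inferInstanceAs (Epi (Projective.π Z)) }
    have : Projective S.X₂ := Projective.projective_over Z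
    obtain ⟨Q, hQ⟩ := ih ((hS.hasProjectiveDimensionLT_X₃_iff n ‹_›).1 hZ)
    refine ⟨spliceResolution hS Q, fun i hi => ?_⟩
    obtain ⟨i, rfl⟩ := Nat.exists_eq_add_one_of_ne_zero (Nat.ne_zero_of_lt hi)
    exact hQ i (by lia)

end ProjectiveResolutions

section ProjDim

variable {R : Type u} [Ring R] {M : ModuleCat.{u} R} {n : ℕ}

lemma projDim_le_iff : M.projDim ≤ n ↔ HasProjectiveDimensionLT M (n + 1) := by
  constructor
  · intro h
    obtain ⟨P, hP⟩ := csInf_mem (s := {n : ℕ∞ | ∃ P : ProjectiveResolution M,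
      ∀ i : ℕ, n < (i : ℕ∞) → IsZero (P.complex.X i)}) ⟨⊤, projectiveResolution M, by simp⟩
    exact hasProjectiveDimensionLT_of_isZero_resolution P fun i hi =>
      hP i (h.trans_lt (Nat.cast_lt.2 hi))
  · intro h
    obtain ⟨P, hP⟩ := exists_projectiveResolution_isZero h
    exact sInf_le ⟨P, fun i hi => hP i (Nat.cast_lt.1 hi)⟩

lemma projDim_lt_iff [Nontrivial M] : M.projDim < n ↔ HasProjectiveDimensionLT M n := by
  cases n with
  | zero =>
    rw [hasProjectiveDimensionLT_zero_iff_isZero, ModuleCat.isZero_iff_subsingleton]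
    simp [not_subsingleton]
  | succ n =>
    rw [← projDim_le_iff, Nat.cast_succ, ENat.lt_natCast_add_one_iff]

end ProjDim

section Syzygies

variable {R : Type u} [Ring R] {M P : Type u} [AddCommGroup M] [Module R M] [AddCommGroup P]
  [Module R P]

lemma moduleProjective_iff_hasProjectiveDimensionLT_one :
    Module.Projective R M ↔ HasProjectiveDimensionLT (ModuleCat.of R M) 1 :=
  (IsProjective.iff_projective M).trans projective_iff_hasProjectiveDimensionLT_one

lemma hasProjectiveDimensionLT_ker_iff [Module.Projective R P] {f : P →ₗ[R] M}
    (hf : Function.Surjective f) (n : ℕ) :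
    HasProjectiveDimensionLT (ModuleCat.of R (LinearMap.ker f)) (n + 1) ↔
      HasProjectiveDimensionLT (ModuleCat.of R M) (n + 2) :=
  ((LinearMap.shortExact_shortComplexKer hf).hasProjectiveDimensionLT_X₃_iff n
    ((IsProjective.iff_projective P).1 inferInstance)).symm

lemma projective_ker [Module.Projective R P] {f : P →ₗ[R] M} (hf : Function.Surjective f)
    (hM : HasProjectiveDimensionLT (ModuleCat.of R M) 2) :
    Module.Projective R (LinearMap.ker f) :=
  moduleProjective_iff_hasProjectiveDimensionLT_one.2
    ((hasProjectiveDimensionLT_ker_iff hf 0).2 hM)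

end Syzygies

section RestrictScalars

variable {A B : Type u} [Ring A] [Ring B] [Module A B]
  {M P : Type u} [AddCommGroup M] [Module A M] [Module B M] [IsScalarTower A B M]
  [AddCommGroup P] [Module A P] [Module B P] [IsScalarTower A B P]

variable (A) in
lemma shortExact_restrictScalars_ker {f : P →ₗ[B] M} (hf : Function.Surjective f) :
    (ModuleCat.shortComplexOfCompEqZero ((LinearMap.ker f).subtype.restrictScalars A)
      (f.restrictScalars A) (LinearMap.ext fun x => x.2)).ShortExact :=
  ModuleCat.shortComplex_shortExact _ (LinearMap.exact_subtype_ker_map f)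
    (LinearMap.ker f).injective_subtype hf

lemma hasProjectiveDimensionLT_restrictScalars [IsScalarTower A B B] {d : ℕ}
    (hB : ∀ X : Type u, HasProjectiveDimensionLT (ModuleCat.of A (X →₀ B)) (d + 1)) {n : ℕ}
    (hM : HasProjectiveDimensionLT (ModuleCat.of B M) (n + 1)) :
    HasProjectiveDimensionLT (ModuleCat.of A M) (n + d + 1) := by
  induction n generalizing M with
  | zero =>
    have := moduleProjective_iff_hasProjectiveDimensionLT_one.2 hM
    obtain ⟨s, hs⟩ := Module.projective_def'.1 this
    have := hB M
    let retract : Retract (ModuleCat.of A M) (ModuleCat.of A (M →₀ B)) :=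
      { i := ModuleCat.ofHom (s.restrictScalars A)
        r := ModuleCat.ofHom ((Finsupp.linearCombination B id).restrictScalars A)
        retract := ModuleCat.hom_ext (LinearMap.ext fun x => LinearMap.congr_fun hs x) }
    rw [Nat.zero_add]
    exact retract.hasProjectiveDimensionLT (d + 1)
  | succ n ih =>
    have hsurj := Finsupp.linearCombination_id_surjective B M
    have hker := ih ((hasProjectiveDimensionLT_ker_iff hsurj n).2 hM)
    rw [Nat.add_right_comm n 1 d]
    have := hB M
    exact (shortExact_restrictScalars_ker A hsurj).hasProjectiveDimensionLT_X₃ (n + d + 1) hker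
      (hasProjectiveDimensionLT_of_ge _ (d + 1) _ (by lia))

end RestrictScalars

section Finsupp

variable {R M : Type*} [Ring R] [AddCommGroup M] [Module R M]

lemma exact_finsuppMapRange {L N : Type*} [AddCommGroup L] [Module R L] [AddCommGroup N]
    [Module R N] {f : L →ₗ[R] M} {g : M →ₗ[R] N} (hfg : Function.Exact f g)
    (hf : Function.Injective f) (X : Type*) :
    Function.Exact (Finsupp.mapRange.linearMap (α := X) f)
      (Finsupp.mapRange.linearMap (α := X) g) := by
  rw [LinearMap.exact_iff, Finsupp.ker_mapRange,
    Finsupp.range_mapRange_linearMap f (LinearMap.ker_eq_bot.2 hf), hfg.linearMap_ker_eq]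

lemma exists_smul_eq_finsupp {r : R} (hr : IsSMulRegular M r) {X : Type*} {f : X →₀ M}
    (hf : ∀ x, ∃ m, r • m = f x) : ∃ g : X →₀ M, r • g = f := by
  choose g hg using hf
  refine ⟨Finsupp.onFinset f.support g fun x hx => ?_, Finsupp.ext hg⟩
  rw [Finsupp.mem_support_iff, ← hg]
  exact fun h => hx (hr.right_eq_zero_of_smul h)

end Finsupp

lemma exists_comp_eq_of_ker_le_ker {R P M N : Type*} [Ring R] [AddCommGroup P] [Module R P]
    [AddCommGroup M] [Module R M] [AddCommGroup N] [Module R N] {f : P →ₗ[R] M}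
    (hf : Function.Surjective f) {g : P →ₗ[R] N} (hfg : LinearMap.ker f ≤ LinearMap.ker g) :
    ∃ s : M →ₗ[R] N, s ∘ₗ f = g :=
  ⟨(LinearMap.ker f).liftQ g hfg ∘ₗ (f.quotKerEquivOfSurjective hf).symm,
    LinearMap.ext fun x => congrArg ((LinearMap.ker f).liftQ g hfg)
      ((f.quotKerEquivOfSurjective hf).symm_apply_apply ((LinearMap.ker f).mkQ x))⟩

lemma exists_extend_of_smul_mem {A P F : Type*} [Ring A] [AddCommGroup P] [Module A P]
    [AddCommGroup F] [Module A F] {t : A} (hnormal : ∀ a, ∃ b, t * a = b * t)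
    (ht : IsSMulRegular F t) {K : Submodule A P} (hK : ∀ x, t • x ∈ K) (u : K →ₗ[A] F)
    (hu : ∀ x, ∃ y, t • y = u ⟨t • x, hK x⟩) :
    ∃ w : P →ₗ[A] F, ∀ x : K, w x = u x := by
  choose w hw using hu
  refine ⟨⟨⟨w, fun x y => ht ?_⟩, fun a x => ht ?_⟩, fun x => ht ?_⟩
  · calc t • w (x + y) = u (⟨t • x, hK x⟩ + ⟨t • y, hK y⟩) := by simp only [hw, smul_add]; rfl
      _ = t • (w x + w y) := by rw [map_add, ← hw, ← hw, smul_add]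
  · obtain ⟨b, hb⟩ := hnormal a
    calc t • w (a • x) = u (b • ⟨t • x, hK x⟩) := by
          simp only [hw, smul_smul, hb, SetLike.mk_smul_mk]
      _ = t • a • w x := by rw [map_smul, ← hw, smul_smul, ← hb, mul_smul]
  · exact (hw x).trans (map_smul u t x)

/-- `B` is the quotient ring of `A` by the ideal generated by a regular normal element `t`. The
quotient map is encoded by an `A`-module structure on `B`, as `a ↦ a • 1`; one half of normality,
`A * t ⊆ t * A`, is a field, and the other half holds because the kernel `A * t` is two-sided. -/
structure IsRegularNormalQuotient (A B : Type*) [Ring A] [Ring B] [Module A B] (t : A) : Prop where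
  surjective : ∀ b : B, ∃ a : A, a • (1 : B) = b
  smul_one_eq_zero_iff : ∀ a : A, a • (1 : B) = 0 ↔ ∃ c, c * t = a
  isRegular : IsRegular t
  dvd_mul_self : ∀ a : A, t ∣ a * t

namespace IsRegularNormalQuotient

variable {A B : Type u} [Ring A] [Ring B] [Module A B] {t : A}
  (h : IsRegularNormalQuotient A B t)
include h

lemma exact_toSpanSingleton :
    Function.Exact (LinearMap.toSpanSingleton A A t) (LinearMap.toSpanSingleton A B 1) :=
  h.smul_one_eq_zero_iff

lemma hasProjectiveDimensionLT_finsupp (X : Type u) :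
    HasProjectiveDimensionLT (ModuleCat.of A (X →₀ B)) 2 := by
  have exact := exact_finsuppMapRange h.exact_toSpanSingleton h.isRegular.right X
  have shortExact := ModuleCat.shortComplex_shortExact
    (ModuleCat.shortComplexOfCompEqZero _ _ exact.linearMap_comp_eq_zero) exact
    (Finsupp.mapRange_injective _ (map_zero _) h.isRegular.right)
    (Finsupp.mapRange_surjective _ (map_zero _) h.surjective)
  have := moduleProjective_iff_hasProjectiveDimensionLT_one.1
    (inferInstance : Module.Projective A (X →₀ A))
  exact shortExact.hasProjectiveDimensionLT_X₃ 1 this inferInstance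

lemma exists_smul_eq_of_mapRange_eq_zero {X : Type*} {f : X →₀ A}
    (hf : Finsupp.mapRange.linearMap (LinearMap.toSpanSingleton A B 1) f = 0) :
    ∃ g : X →₀ A, t • g = f := by
  refine exists_smul_eq_finsupp h.isRegular.left.isSMulRegular fun x => ?_
  obtain ⟨c, hc⟩ := (h.smul_one_eq_zero_iff (f x)).1 (DFunLike.congr_fun hf x)
  obtain ⟨b, hb⟩ := h.dvd_mul_self c
  exact ⟨b, by rw [smul_eq_mul, ← hb, hc]⟩

protected lemma smul_one : t • (1 : B) = 0 :=
  (h.smul_one_eq_zero_iff t).2 ⟨1, one_mul t⟩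

protected lemma smul_eq_zero {M : Type*} [AddCommGroup M] [Module A M] [Module B M]
    [IsScalarTower A B M] (m : M) : t • m = 0 := by
  rw [← one_smul B m, ← smul_assoc, h.smul_one, zero_smul]

lemma exists_mul_eq [IsScalarTower A B B] (a : A) : ∃ b, t * a = b * t := by
  obtain ⟨b, hb⟩ := (h.smul_one_eq_zero_iff (t * a)).1 (by rw [mul_smul, h.smul_eq_zero])
  exact ⟨b, hb.symm⟩

lemma map_smul_of_linearMap {M N : Type*} [AddCommGroup M] [Module A M] [Module B M]
    [IsScalarTower A B M] [AddCommGroup N] [Module A N] [Module B N] [IsScalarTower A B N]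
    (f : M →ₗ[A] N) (b : B) (m : M) : f (b • m) = b • f m := by
  obtain ⟨a, rfl⟩ := h.surjective b
  simp only [smul_assoc, one_smul, map_smul]

lemma subsingleton_of_projective {M : Type*} [AddCommGroup M] [Module A M] [Module B M]
    [IsScalarTower A B M] [Module.Projective A M] : Subsingleton M := by
  obtain ⟨s, hs⟩ := Module.projective_def'.1 (inferInstance : Module.Projective A M)
  have regular : IsSMulRegular (M →₀ A) t := h.isRegular.left.isSMulRegular.finsupp
  refine subsingleton_of_forall_eq 0 fun m => ?_
  have : s m = 0 := regular.right_eq_zero_of_smul (by rw [← map_smul, h.smul_eq_zero, map_zero])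
  rw [← LinearMap.id_apply (R := A) m, ← hs, LinearMap.comp_apply, this, map_zero]

variable [IsScalarTower A B B]

section SplitCover

variable {P F M : Type*} [AddCommGroup P] [Module A P]
  [AddCommGroup F] [Module A F] [Module B F] [IsScalarTower A B F]
  [AddCommGroup M] [Module A M] [Module B M] [IsScalarTower A B M]

lemma exists_eqOn_comap_of_projective (v : P →ₗ[A] F) (L : Submodule B F) [Module.Projective B L]
    [Module.Projective A ((L.restrictScalars A).comap v)] :
    ∃ w : P →ₗ[A] L, ∀ x, v x ∈ L → (w x : F) = v x := by
  obtain ⟨i, hi⟩ := Module.projective_def'.1 (inferInstance : Module.Projective B L)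
  let K := (L.restrictScalars A).comap v
  let vK : K →ₗ[A] L := (v.domRestrict K).codRestrict (L.restrictScalars A) fun x => x.2
  let p : (L →₀ A) →ₗ[A] (L →₀ B) := Finsupp.mapRange.linearMap (LinearMap.toSpanSingleton A B 1)
  have hp : Function.Surjective p := Finsupp.mapRange_surjective _ (map_zero _) h.surjective
  obtain ⟨u, hu⟩ := Module.projective_lifting_property p (i.restrictScalars A ∘ₗ vK) hp
  have htK (x : P) : t • x ∈ K := by
    change v (t • x) ∈ L
    rw [map_smul, h.smul_eq_zero]
    exact L.zero_mem
  have htu (x : P) : ∃ y, t • y = u ⟨t • x, htK x⟩ := by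
    refine h.exists_smul_eq_of_mapRange_eq_zero ?_
    have : vK ⟨t • x, htK x⟩ = 0 := Subtype.ext ((map_smul v t x).trans (h.smul_eq_zero _))
    exact (LinearMap.congr_fun hu _).trans ((congrArg i this).trans (map_zero i))
  obtain ⟨w, hw⟩ := exists_extend_of_smul_mem h.exists_mul_eq
    h.isRegular.left.isSMulRegular.finsupp htK u htu
  let q : (L →₀ B) →ₗ[A] L := (Finsupp.linearCombination B id).restrictScalars A
  refine ⟨q ∘ₗ p ∘ₗ w, fun x hx => ?_⟩
  have : q (p (w x)) = vK ⟨x, hx⟩ := by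
    calc q (p (w x)) = q (p (u ⟨x, hx⟩)) := by rw [← hw ⟨x, hx⟩]
      _ = q (i (vK ⟨x, hx⟩)) := congrArg q (LinearMap.congr_fun hu _)
      _ = vK ⟨x, hx⟩ := LinearMap.congr_fun hi _
  exact congrArg Subtype.val this

lemma projective_of_projective_ker [Module.Projective A P] [Module.Projective B F] {φ : P →ₗ[A] M}
    (hφ : Function.Surjective φ) [Module.Projective A (LinearMap.ker φ)] {g : F →ₗ[B] M}
    (hg : Function.Surjective g) [Module.Projective B (LinearMap.ker g)] :
    Module.Projective B M := by
  obtain ⟨v, hv⟩ := Module.projective_lifting_property (g.restrictScalars A) φ hg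
  have hker : LinearMap.ker φ = ((LinearMap.ker g).restrictScalars A).comap v := by
    rw [← hv]
    rfl
  have : Module.Projective A (((LinearMap.ker g).restrictScalars A).comap v) := hker ▸ ‹_›
  obtain ⟨w, hw⟩ := h.exists_eqOn_comap_of_projective v (LinearMap.ker g)
  let ρ : P →ₗ[A] F := v - (LinearMap.ker g).subtype.restrictScalars A ∘ₗ w
  have hρ : LinearMap.ker φ ≤ LinearMap.ker ρ := fun x hx =>
    sub_eq_zero.2 (hw x (by rwa [hker] at hx)).symm
  have hgρ (x : P) : g (ρ x) = φ x := by
    rw [← hv]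
    simp [ρ]
  obtain ⟨s, hs⟩ := exists_comp_eq_of_ker_le_ker hφ hρ
  let sB : M →ₗ[B] F := { s with map_smul' := h.map_smul_of_linearMap s }
  refine Module.Projective.of_split sB g (LinearMap.ext fun m => ?_)
  obtain ⟨x, rfl⟩ := hφ m
  exact (congrArg g (LinearMap.congr_fun hs x)).trans (hgρ x)

end SplitCover

lemma hasProjectiveDimensionLT_of_succ {n : ℕ} {M : Type u} [AddCommGroup M] [Module A M]
    [Module B M] [IsScalarTower A B M]
    (hB : HasProjectiveDimensionLT (ModuleCat.of B M) (n + 1))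
    (hA : HasProjectiveDimensionLT (ModuleCat.of A M) (n + 1)) :
    HasProjectiveDimensionLT (ModuleCat.of B M) n := by
  have hsurj := Finsupp.linearCombination_id_surjective B M
  match n with
  | 0 =>
    have := moduleProjective_iff_hasProjectiveDimensionLT_one.2 hA
    exact (hasProjectiveDimensionLT_zero_iff_isZero _).2
      (ModuleCat.isZero_of_iff_subsingleton.2 h.subsingleton_of_projective)
  | 1 =>
    have hsurjA := Finsupp.linearCombination_id_surjective A M
    have := projective_ker hsurj hB
    have := projective_ker hsurjA hA
    exact moduleProjective_iff_hasProjectiveDimensionLT_one.1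
      (h.projective_of_projective_ker hsurjA hsurj)
  | n + 2 =>
    have hfree := h.hasProjectiveDimensionLT_finsupp M
    have hker := (shortExact_restrictScalars_ker A hsurj).hasProjectiveDimensionLT_X₁ (n + 2)
      (hasProjectiveDimensionLT_of_ge _ 2 _ (by lia)) hA
    exact (hasProjectiveDimensionLT_ker_iff hsurj n).1
      (hasProjectiveDimensionLT_of_succ ((hasProjectiveDimensionLT_ker_iff hsurj (n + 1)).2 hB)
        hker)

theorem projDim_eq_projDim_add_one {M : Type u} [AddCommGroup M] [Module A M] [Module B M]
    [IsScalarTower A B M] [Nontrivial M] (hfin : (ModuleCat.of B M).projDim ≠ ⊤) :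
    (ModuleCat.of A M).projDim = (ModuleCat.of B M).projDim + 1 := by
  obtain ⟨n, hn⟩ := ENat.ne_top_iff_exists.1 hfin
  have hB := projDim_le_iff.1 hn.ge
  rw [← hn]
  refine le_antisymm ?_ (le_of_not_gt fun hlt => ?_)
  · exact_mod_cast projDim_le_iff.2
      (hasProjectiveDimensionLT_restrictScalars h.hasProjectiveDimensionLT_finsupp hB)
  · have hA := (projDim_lt_iff (n := n + 1)).1 (by exact_mod_cast hlt)
    exact (projDim_lt_iff.2 (h.hasProjectiveDimensionLT_of_succ hB hA)).ne hn.symm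

end IsRegularNormalQuotient

theorem stmt_10_general {A B : Type u} [Ring A] [Ring B] (π : A →+* B)
    (hπ : Function.Surjective π) {t : A} (hkerπ : RingHom.ker π = Ideal.span {t})
    (hreg : IsRegular t) (hnormal : ∀ a : A, t ∣ a * t) {M : Type u} [AddCommGroup M]
    [Nontrivial M] [Module A M] [Module B M] (hM : ∀ (a : A) (m : M), a • m = π a • m)
    (hfin : ModuleCat.projDim (ModuleCat.of B M) ≠ ⊤) :
    ModuleCat.projDim (ModuleCat.of A M) = ModuleCat.projDim (ModuleCat.of B M) + 1 := by
  let := Module.compHom B π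
  have smul_def (a : A) (b : B) : a • b = π a * b := rfl
  have : IsScalarTower A B B := ⟨fun a b c => mul_assoc (π a) b c⟩
  have : IsScalarTower A B M := ⟨fun a b m => by rw [smul_def, mul_smul, hM]⟩
  have h : IsRegularNormalQuotient A B t :=
    { surjective := fun b => (hπ b).imp fun a ha => by rw [smul_def, mul_one, ha]
      smul_one_eq_zero_iff := fun a => by
        rw [smul_def, mul_one, ← RingHom.mem_ker, hkerπ, Ideal.mem_span_singleton']
      isRegular := hreg
      dvd_mul_self := hnormal }
  exact h.projDim_eq_projDim_add_one hfin

/-- Lemma 4.3(e): let `A` be a connected graded `k`-algebra and let `t ∈ A` be a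
homogeneous regular normal element of positive degree.  Let `B = A/(t)` (presented as a
surjective algebra map `π : A → B` with kernel the ideal generated by `t`), with the induced
augmentation `εB`.  If the projective dimension of the trivial module `k` over `B` is finite,
then `pdim_A k = pdim_B k + 1`. -/
theorem stmt_10 (k : Type u) [Field k] (A : Type u) [Ring A] [Algebra k A]
    (𝒜 : ℕ → Submodule k A) [GradedAlgebra 𝒜]
    (hconn : 𝒜 0 = (1 : Submodule k A))
    (ε : A →ₐ[k] k)
    (hker : RingHom.ker ε.toRingHom = Ideal.span {x : A | ∃ i, 0 < i ∧ x ∈ 𝒜 i})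
    (t : A) (d : ℕ) (hd : 0 < d) (ht : t ∈ 𝒜 d)
    (hregl : ∀ x : A, t * x = 0 → x = 0) (hregr : ∀ x : A, x * t = 0 → x = 0)
    (hnormal : Set.range (fun a : A => t * a) = Set.range (fun a : A => a * t))
    (B : Type u) [Ring B] [Algebra k B] (π : A →ₐ[k] B) (hπ : Function.Surjective π)
    (hkerπ : RingHom.ker π.toRingHom = Ideal.span {t})
    (εB : B →ₐ[k] k) (hεB : εB.comp π = ε)
    [Module A k] (hsmul : ∀ (a : A) (c : k), a • c = ε a * c)
    [Module B k] (hsmulB : ∀ (b : B) (c : k), b • c = εB b * c)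
    (hfin : ModuleCat.projDim (ModuleCat.of B k) ≠ ⊤) :
    ModuleCat.projDim (ModuleCat.of A k) = ModuleCat.projDim (ModuleCat.of B k) + 1 := by
  exact stmt_10_general π.toRingHom hπ hkerπ
    ⟨isLeftRegular_iff_right_eq_zero_of_mul.2 hregl, isRightRegular_iff_left_eq_zero_of_mul.2 hregr⟩
    (fun a => (hnormal.symm.subset ⟨a, rfl⟩).imp fun _ => Eq.symm)
    (fun a c => by rw [hsmul, ← hεB]; exact (hsmulB _ _).symm) hfin
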